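/- BB(2) = 4: among all Turing machines with at most 2 states (in the model without a separate halting state) that halt on the all-zero tape, the maximum number of 1s in the computed word is exactly 4. -/

import Mathlib

/-- Head movement directions. -/
inductive Dir : Type
  | left | stay | right

/-- Displacement of the head for each direction. -/
def Dir.move : Dir → ℤ
  | .left => -1
  | .stay => 0
  | .right => 1

/-- A configuration of a Turing machine with state type `Q`: current state,
head position and the two-way infinite binary tape. -/
structure Cfg (Q : Type) where
  state : Q
  head : ℤ
  tape : ℤ → Bool

/-- One step of the machine with partial transition function `f`
(`none` if the machine halts, i.e. `f` is undefined on the current pair). -/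
def stepTM {Q : Type} (f : Q × Bool → Option (Q × Bool × Dir)) (c : Cfg Q) :
    Option (Cfg Q) :=
  (f (c.state, c.tape c.head)).map fun qbd =>
    ⟨qbd.1, c.head + qbd.2.2.move, Function.update c.tape c.head qbd.2.1⟩

/-- Running `t` steps (returns `none` if the machine halts strictly before `t` steps). -/
def stepsTM {Q : Type} (f : Q × Bool → Option (Q × Bool × Dir)) :
    ℕ → Cfg Q → Option (Cfg Q)
  | 0, c => some c
  | t + 1, c => (stepTM f c).bind (stepsTM f t)

/-- Initial configuration: initial state `q0`, head at `0`, all-zero tape. -/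
def initCfg {Q : Type} (q0 : Q) : Cfg Q := ⟨q0, 0, fun _ => false⟩

/-- The machine is halted in configuration `c`: the transition function is
undefined on the current (state, symbol) pair. -/
def Halted {Q : Type} (f : Q × Bool → Option (Q × Bool × Dir)) (c : Cfg Q) : Prop :=
  f (c.state, c.tape c.head) = none

/-- `w` is the tape contents from the leftmost 1 to the rightmost 1
(the empty word if the tape contains no 1). -/
def TapeWord (tape : ℤ → Bool) (w : List Bool) : Prop :=
  ∃ i : ℤ,
    (∀ k : ℕ, k < w.length → w.getD k false = tape (i + k)) ∧
    (∀ j : ℤ, tape j = true → i ≤ j ∧ j < i + w.length) ∧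
    (w ≠ [] → w.getD 0 false = true ∧ w.getLastD false = true)

/-- The machine with transition function `f` and initial state `q0`, started on
the all-zero tape, halts after exactly `t` steps computing the word `w`. -/
def Computes {Q : Type} (f : Q × Bool → Option (Q × Bool × Dir)) (q0 : Q)
    (w : List Bool) (t : ℕ) : Prop :=
  ∃ c : Cfg Q, stepsTM f t (initCfg q0) = some c ∧ Halted f c ∧ TapeWord c.tape w

/-!
A machine is discovered lazily: starting from the table with no defined entry, run it on the
all-zero tape until it needs an undefined entry. A machine extending the table either halts right
there, leaving the tape as it is, or defines that entry in one of finitely many ways, and each of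
them is explored in turn. A machine with all four entries defined never halts, so four levels
suffice. The tables that run forever without needing an undefined entry are recognised by a finite
set of windows (state, scanned symbol and two symbols on either side) that contains the initial
window, contains no halting window, and is closed under steps, where the symbol entering a window is
only required to fit the blocks of symbols occurring in the set.
-/

namespace BusyBeaver

open StateTransition

universe u

theorem evalDom_of_le {σ : Type*} {f g : σ → Option σ} (h : ∀ a b, b ∈ g a → b ∈ f a) {a : σ}
    (ha : (eval f a).Dom) : (eval g a).Dom := by
  obtain ⟨c, hc⟩ := Part.dom_iff_mem.1 ha
  refine evalInduction hc fun a _ ih => ?_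
  cases hg : g a with
  | none => exact Part.dom_iff_mem.2 ⟨a, mem_eval.2 ⟨.refl, hg⟩⟩
  | some b =>
    rw [reaches_eval (.single hg)]
    exact ih b (h a b hg)

theorem eval_map_of_commute {σ τ : Type u} {f : σ → Option σ} {g : τ → Option τ} {φ : σ → τ}
    (h : ∀ a, g (φ a) = (f a).map φ) (a : σ) : eval g (φ a) = φ <$> eval f a := by
  refine tr_eval' f g φ (fun_respects.2 fun a => ?_) a
  have ha := h a
  cases hf : f a with
  | none => rwa [hf] at ha
  | some b =>
    rw [hf] at ha
    exact .single ha

theorem not_evalDom_of_invariant {σ : Type*} {f : σ → Option σ} {I : σ → Prop}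
    (hI : ∀ a, I a → ∃ b ∈ f a, I b) {a : σ} (ha : I a) : ¬ (eval f a).Dom := by
  intro hdom
  obtain ⟨c, hc⟩ := Part.dom_iff_mem.1 hdom
  refine evalInduction (C := fun a => I a → False) hc (fun a _ ih ha => ?_) ha
  obtain ⟨b, hab, hb⟩ := hI a ha
  exact ih b hab hb

/-- Run the transition system `f` until it halts; `none` if that does not happen in fewer than
`n` steps. -/
def evalWithin {σ : Type*} (f : σ → Option σ) : ℕ → σ → Option σ
  | 0, _ => none
  | n + 1, a =>
    match f a with
    | none => some a
    | some b => evalWithin f n b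

theorem mem_eval_of_evalWithin {σ : Type*} {f : σ → Option σ} {n : ℕ} {a c : σ}
    (h : evalWithin f n a = some c) : c ∈ eval f a := by
  induction n generalizing a with
  | zero => cases h
  | succ n ih =>
    cases hf : f a with
    | none =>
      simp only [evalWithin, hf, Option.some.injEq] at h
      exact mem_eval.2 ⟨h ▸ .refl, h ▸ hf⟩
    | some b =>
      simp only [evalWithin, hf] at h
      rw [reaches_eval (.single hf)]
      exact ih h

/-- A transition function, read as the transition table of a machine all of whose entries may
still be undefined. -/
abbrev Table (Q : Type) := Q × Bool → Option (Q × Bool × Dir)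

variable {Q : Type} {p f : Table Q} {q₀ : Q} {n : ℕ}

theorem stepTM_eq_none_iff {c : Cfg Q} : stepTM f c = none ↔ Halted f c := by
  simp only [stepTM, Halted, Option.map_eq_none_iff]

theorem reaches_of_stepsTM {t : ℕ} {c c' : Cfg Q} (h : stepsTM f t c = some c') :
    Reaches (stepTM f) c c' := by
  induction t generalizing c with
  | zero => exact Option.some.inj h ▸ .refl
  | succ t ih =>
    obtain ⟨d, hd, hdc⟩ := Option.bind_eq_some_iff.1 h
    exact .head hd (ih hdc)

/-- The set of positions carrying a `1`. -/
def ones (tape : ℤ → Bool) : Set ℤ := {j | tape j = true}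

theorem lt_length_of_getD_eq_true {w : List Bool} {k : ℕ} (hk : w.getD k false = true) :
    k < w.length := by
  by_contra hlen
  rw [List.getD_eq_default _ _ (not_lt.1 hlen)] at hk
  exact Bool.false_ne_true hk

theorem natCount_getD_eq_count (w : List Bool) :
    Nat.count (fun k => w.getD k false = true) w.length = w.count true := by
  induction w with
  | nil => rfl
  | cons b w ih => cases b <;> simp [Nat.count_succ', ← ih]

theorem encard_setOf_getD (w : List Bool) :
    {k | w.getD k false = true}.encard = w.count true := by
  have h : {k | w.getD k false = true} =
      ({k ∈ Finset.range w.length | w.getD k false = true} : Finset ℕ) := by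
    ext k
    simp only [Finset.coe_filter, Finset.mem_range, Set.mem_ofPred_eq, iff_and_self]
    exact lt_length_of_getD_eq_true
  rw [h, Set.encard_coe_eq_coe_finsetCard, ← Nat.count_eq_card_filter_range,
    natCount_getD_eq_count]

theorem encard_ones_of_tapeWord {tape : ℤ → Bool} {w : List Bool} (hw : TapeWord tape w) :
    (ones tape).encard = w.count true := by
  obtain ⟨i, hread, hsupp, -⟩ := hw
  have himage : ones tape = (fun k : ℕ => i + k) '' {k | w.getD k false = true} := by
    ext j
    constructor
    · intro hj
      obtain ⟨hij, hjw⟩ := hsupp j hj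
      lift j - i to ℕ using by omega with k hk
      obtain rfl : j = i + k := by omega
      exact ⟨k, (hread k (by omega)).trans hj, rfl⟩
    · rintro ⟨k, hk, rfl⟩
      exact (hread k (lt_length_of_getD_eq_true hk)).symm.trans hk
  rw [himage, Function.Injective.encard_image (fun a b h => by simpa using h), encard_setOf_getD]

/-- Inclusion of partial transition functions: `f` agrees with `p` wherever `p` is defined. -/
def Extends (f p : Table Q) : Prop := ∀ k, ∀ t ∈ p k, t ∈ f k

theorem Extends.mem_stepTM (h : Extends f p) {c c' : Cfg Q} (hc : c' ∈ stepTM p c) :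
    c' ∈ stepTM f c := by
  obtain ⟨t, ht, rfl⟩ := Option.map_eq_some_iff.1 hc
  exact Option.map_eq_some_iff.2 ⟨t, h _ t ht, rfl⟩

theorem Extends.eval_eq (h : Extends f p) {c c' : Cfg Q} (hc : c' ∈ eval (stepTM p) c) :
    eval (stepTM f) c = eval (stepTM f) c' :=
  reaches_eval (Relation.ReflTransGen.mono (fun _ _ => h.mem_stepTM) _ _ (mem_eval.1 hc).1)

theorem Extends.update [DecidableEq Q] (h : Extends f p) {k : Q × Bool} {t : Q × Bool × Dir}
    (ht : t ∈ f k) : Extends f (Function.update p k (some t)) := by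
  intro l u hu
  rcases eq_or_ne l k with rfl | hne
  · rw [Function.update_self, Option.mem_some_iff] at hu
    exact hu ▸ ht
  · rw [Function.update_of_ne hne] at hu
    exact h l u hu

/-- A configuration with finitely many `1`s, stored as the set of their positions so that the
kernel can evaluate it. -/
structure FinCfg (Q : Type) where
  state : Q
  head : ℤ
  support : Finset ℤ

namespace FinCfg

/-- The configuration represented by `x`. -/
def toCfg (x : FinCfg Q) : Cfg Q := ⟨x.state, x.head, fun j => decide (j ∈ x.support)⟩

/-- The table entry that `x` consults. -/
def key (x : FinCfg Q) : Q × Bool := (x.state, decide (x.head ∈ x.support))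

/-- The counterpart of `stepTM` on finite configurations. -/
def step (f : Table Q) (x : FinCfg Q) : Option (FinCfg Q) :=
  (f x.key).map fun t =>
    ⟨t.1, x.head + t.2.2.move, if t.2.1 then insert x.head x.support else x.support.erase x.head⟩

theorem stepTM_toCfg (f : Table Q) (x : FinCfg Q) :
    stepTM f x.toCfg = (x.step f).map toCfg := by
  have htape (b : Bool) : Function.update x.toCfg.tape x.head b =
      fun j => decide (j ∈ if b then insert x.head x.support else x.support.erase x.head) := by
    ext j
    by_cases hj : j = x.head <;> cases b <;> simp [toCfg, hj]
  simp only [stepTM, step, Option.map_map]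
  exact congrArg (Option.map · (f x.key)) (funext fun t => congrArg (Cfg.mk _ _) (htape _))

theorem eval_toCfg (f : Table Q) (x : FinCfg Q) :
    eval (stepTM f) x.toCfg = toCfg <$> eval (step f) x :=
  eval_map_of_commute (stepTM_toCfg f) x

theorem encard_ones_toCfg (x : FinCfg Q) : (ones x.toCfg.tape).encard = x.support.card := by
  simp [ones, toCfg, ← Set.encard_coe_eq_coe_finsetCard]

/-- The finite form of `initCfg`. -/
def blank (q₀ : Q) : FinCfg Q := ⟨q₀, 0, ∅⟩

theorem toCfg_blank (q₀ : Q) : (blank q₀).toCfg = initCfg q₀ := rfl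

end FinCfg

/-- The configuration reached from `c` by writing `b`, moving the head by `δ` and entering the
state `q`. -/
def writeMove (c : Cfg Q) (q : Q) (b : Bool) (δ : ℤ) : Cfg Q :=
  ⟨q, c.head + δ, Function.update c.tape c.head b⟩

/-- The part of the tape strictly beyond the head in direction `ε = ±1`, read outwards. -/
def halfTape (ε : ℤˣ) (c : Cfg Q) : Stream' Bool := fun k => c.tape (c.head + ε * (k + 1))

section halfTape

variable (ε : ℤˣ) (c : Cfg Q) (q : Q) (b : Bool)

theorem symbol_writeMove_zero :
    (writeMove c q b 0).tape (writeMove c q b 0).head = b := by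
  simp [writeMove]

theorem symbol_writeMove :
    (writeMove c q b ε).tape (writeMove c q b ε).head = (halfTape ε c).head := by
  simp [writeMove, halfTape, Stream'.head, Stream'.get]

theorem halfTape_writeMove_zero : halfTape ε (writeMove c q b 0) = halfTape ε c := by
  funext k
  have hne : (ε : ℤ) * (k + 1) ≠ 0 := mul_ne_zero ε.ne_zero (by omega)
  simp only [halfTape, writeMove, add_zero]
  exact Function.update_of_ne (by omega) _ _

theorem halfTape_writeMove : halfTape ε (writeMove c q b ε) = (halfTape ε c).tail := by
  funext k
  have hne : (ε : ℤ) * (k + 2) ≠ 0 := mul_ne_zero ε.ne_zero (by omega)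
  calc Function.update c.tape c.head b (c.head + ε + ε * (k + 1))
      = Function.update c.tape c.head b (c.head + ε * (k + 2)) := by ring_nf
    _ = c.tape (c.head + ε * (k + 2)) := Function.update_of_ne (by omega) _ _
    _ = c.tape (c.head + ε * ((k + 1 : ℕ) + 1)) := by push_cast; ring_nf

theorem halfTape_neg_writeMove :
    halfTape (-ε) (writeMove c q b ε) = Stream'.cons b (halfTape (-ε) c) := by
  funext k
  have hpos : c.head + ε + (-ε : ℤˣ) * (k + 1) = c.head - ε * k := by push_cast; ring
  have hread : halfTape (-ε) (writeMove c q b ε) k =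
      Function.update c.tape c.head b (c.head - ε * k) := congrArg _ hpos
  rw [hread]
  cases k with
  | zero => simp [Stream'.cons]
  | succ k =>
    have hne : (ε : ℤ) * ((k + 1 : ℕ) : ℤ) ≠ 0 := mul_ne_zero ε.ne_zero (by omega)
    rw [Function.update_of_ne (by omega)]
    simp [Stream'.cons, halfTape, sub_eq_add_neg]

end halfTape

/-- Every block of `n` consecutive symbols of `s` lies in `G`. -/
def HasBlocksIn (n : ℕ) (G : Set (List Bool)) (s : Stream' Bool) : Prop :=
  ∀ k, (s.drop k).take n ∈ G

namespace HasBlocksIn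

variable {G G' : Set (List Bool)} {s : Stream' Bool}

theorem mono (h : HasBlocksIn n G s) (hG : G ⊆ G') : HasBlocksIn n G' s :=
  fun k => hG (h k)

theorem take_mem (h : HasBlocksIn n G s) : s.take n ∈ G := h 0

theorem tail (h : HasBlocksIn n G s) : HasBlocksIn n G s.tail :=
  fun k => h (k + 1)

theorem cons {b : Bool} (h : HasBlocksIn n G s) (hb : (Stream'.cons b s).take n ∈ G) :
    HasBlocksIn n G (Stream'.cons b s)
  | 0 => hb
  | k + 1 => h k

theorem const {b : Bool} (hb : (Stream'.const b).take n ∈ G) :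
    HasBlocksIn n G (Stream'.const b) :=
  fun _ => by rwa [Stream'.drop_const]

end HasBlocksIn

/-- What a configuration shows within a fixed distance of the head: the state, the scanned symbol
and the symbols on either side, read outwards from the head. -/
structure Window (Q : Type) where
  state : Q
  symbol : Bool
  left : List Bool
  right : List Bool
deriving DecidableEq

/-- The window of radius `n` of the configuration `c`. -/
def window (n : ℕ) (c : Cfg Q) : Window Q :=
  ⟨c.state, c.tape c.head, (halfTape (-1) c).take n, (halfTape 1 c).take n⟩

section window

variable (n : ℕ) (c : Cfg Q) (q : Q) (b : Bool)

theorem window_writeMove_stay :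
    window n (writeMove c q b Dir.stay.move) =
      ⟨q, b, (halfTape (-1) c).take n, (halfTape 1 c).take n⟩ := by
  simp only [window, Dir.move, symbol_writeMove_zero, halfTape_writeMove_zero]
  rfl

theorem window_writeMove_left :
    window n (writeMove c q b Dir.left.move) =
      ⟨q, (halfTape (-1) c).head, (halfTape (-1) c).tail.take n,
        (Stream'.cons b (halfTape 1 c)).take n⟩ := by
  have hfar := halfTape_neg_writeMove (-1) c q b
  rw [neg_neg] at hfar
  rw [← symbol_writeMove (-1) c q b, ← halfTape_writeMove (-1) c q b, ← hfar]
  rfl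

theorem window_writeMove_right :
    window n (writeMove c q b Dir.right.move) =
      ⟨q, (halfTape 1 c).head, (Stream'.cons b (halfTape (-1) c)).take n,
        (halfTape 1 c).tail.take n⟩ := by
  rw [← symbol_writeMove 1 c q b, ← halfTape_writeMove 1 c q b, ← halfTape_neg_writeMove 1 c q b]
  rfl

end window

/-- The configuration `c` looks locally like `S`: its window of radius `n` belongs to `S`, and
every block of `n` symbols beside the head is the corresponding side of some window in `S`. -/
structure Covered (n : ℕ) (S : Set (Window Q)) (c : Cfg Q) : Prop where
  window_mem : window n c ∈ S
  left : HasBlocksIn n (Window.left '' S) (halfTape (-1) c)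
  right : HasBlocksIn n (Window.right '' S) (halfTape 1 c)

theorem Covered.mono {S T : Set (Window Q)} {c : Cfg Q} (h : Covered n S c) (hST : S ⊆ T) :
    Covered n T c :=
  ⟨hST h.window_mem, h.left.mono (Set.image_mono hST), h.right.mono (Set.image_mono hST)⟩

theorem covered_writeMove {S : Set (Window Q)} {c : Cfg Q} {q : Q} {b : Bool} {d : Dir}
    (hc : Covered n S c) (hmem : window n (writeMove c q b d.move) ∈ S) :
    Covered n S (writeMove c q b d.move) := by
  refine ⟨hmem, ?_, ?_⟩
  · cases d with
    | stay => exact (halfTape_writeMove_zero (-1) c q b).symm ▸ hc.left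
    | left => exact (halfTape_writeMove (-1) c q b).symm ▸ hc.left.tail
    | right =>
      exact (halfTape_neg_writeMove 1 c q b).symm ▸
        hc.left.cons ⟨_, hmem, congrArg Window.left (window_writeMove_right n c q b)⟩
  · cases d with
    | stay => exact (halfTape_writeMove_zero 1 c q b).symm ▸ hc.right
    | left =>
      exact (halfTape_neg_writeMove (-1) c q b).symm ▸
        hc.right.cons ⟨_, hmem, congrArg Window.right (window_writeMove_left n c q b)⟩
    | right => exact (halfTape_writeMove 1 c q b).symm ▸ hc.right.tail

theorem covered_initCfg {S : Set (Window Q)} (h : window n (initCfg q₀) ∈ S) :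
    Covered n S (initCfg q₀) where
  window_mem := h
  left := .const ⟨_, h, rfl⟩
  right := .const ⟨_, h, rfl⟩

/-- The windows that can follow `x` after one step of `f`, when the symbol that enters the window
comes from an overlapping window of `S`. Removing duplicates matters only for the evaluation. -/
def successors (f : Table Q) (S : List (Window Q)) (x : Window Q) : List (Window Q) :=
  match f (x.state, x.symbol) with
  | none => []
  | some (q, b, .stay) => [⟨q, b, x.left, x.right⟩]
  | some (q, b, .left) =>
    ((S.map Window.left).dedup.filter fun l => l.dropLast = x.left.tail).map fun l =>
      ⟨q, x.left.headI, l, (b :: x.right).dropLast⟩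
  | some (q, b, .right) =>
    ((S.map Window.right).dedup.filter fun r => r.dropLast = x.right.tail).map fun r =>
      ⟨q, x.right.headI, (b :: x.left).dropLast, r⟩

/-- Closedness of a set of windows: none of them is halting, and their successors belong to the
set. -/
def IsClosed (f : Table Q) (S : List (Window Q)) : Prop :=
  ∀ x ∈ S, (f (x.state, x.symbol)).isSome ∧ successors f S x ⊆ S

theorem window_writeMove_mem_successors {S : List (Window Q)} {c : Cfg Q} {q : Q} {b : Bool}
    {d : Dir} (hc : Covered (n + 1) {x | x ∈ S} c)
    (hf : f (c.state, c.tape c.head) = some (q, b, d)) :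
    window (n + 1) (writeMove c q b d.move) ∈ successors f S (window (n + 1) c) := by
  have hentry : f ((window (n + 1) c).state, (window (n + 1) c).symbol) = some (q, b, d) := hf
  simp only [successors, hentry]
  cases d with
  | stay => exact List.mem_singleton.2 (window_writeMove_stay _ c q b)
  | left =>
    have hl := hc.left.tail.take_mem
    refine List.mem_map.2 ⟨_, List.mem_filter.2
      ⟨List.mem_dedup.2 (List.mem_map.2 hl), decide_eq_true Stream'.dropLast_take⟩, ?_⟩
    have hfar : (b :: (window (n + 1) c).right).dropLast =
        (Stream'.cons b (halfTape 1 c)).take (n + 1) := by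
      rw [window, ← Stream'.take_succ_cons, Stream'.dropLast_take, Nat.add_sub_cancel]
    rw [window_writeMove_left, hfar]
    rfl
  | right =>
    have hr := hc.right.tail.take_mem
    refine List.mem_map.2 ⟨_, List.mem_filter.2
      ⟨List.mem_dedup.2 (List.mem_map.2 hr), decide_eq_true Stream'.dropLast_take⟩, ?_⟩
    have hfar : (b :: (window (n + 1) c).left).dropLast =
        (Stream'.cons b (halfTape (-1) c)).take (n + 1) := by
      rw [window, ← Stream'.take_succ_cons, Stream'.dropLast_take, Nat.add_sub_cancel]
    rw [window_writeMove_right, hfar]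
    rfl

theorem Covered.exists_step {S : List (Window Q)} (hS : IsClosed f S) {c : Cfg Q}
    (hc : Covered (n + 1) {x | x ∈ S} c) :
    ∃ c' ∈ stepTM f c, Covered (n + 1) {x | x ∈ S} c' := by
  obtain ⟨hdef, hsucc⟩ := hS _ hc.window_mem
  obtain ⟨⟨q, b, d⟩, hf⟩ := Option.isSome_iff_exists.1 hdef
  exact ⟨writeMove c q b d.move, Option.map_eq_some_iff.2 ⟨_, hf, rfl⟩,
    covered_writeMove hc (hsucc (window_writeMove_mem_successors hc hf))⟩

section Search

variable [DecidableEq Q]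

instance (f : Table Q) (S : List (Window Q)) : Decidable (IsClosed f S) :=
  inferInstanceAs (Decidable (∀ x ∈ S, _ ∧ _))

/-- Search for a closed set containing `S`, adding all successors to `S` fewer than `n` times. -/
def extendsToClosed (f : Table Q) : ℕ → List (Window Q) → Bool
  | 0, _ => false
  | n + 1, S => decide (IsClosed f S) || extendsToClosed f n (S.flatMap (successors f S) ∪ S)

theorem Covered.not_evalDom {rounds : ℕ} {S : List (Window Q)} {c : Cfg Q}
    (hc : Covered (n + 1) {x | x ∈ S} c) (h : extendsToClosed f rounds S = true) :
    ¬ (eval (stepTM f) c).Dom := by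
  induction rounds generalizing S with
  | zero => cases h
  | succ rounds ih =>
    rcases (Bool.or_eq_true _ _).mp h with hclosed | hgrow
    · exact not_evalDom_of_invariant (fun _ => Covered.exists_step (of_decide_eq_true hclosed)) hc
    · exact ih (hc.mono fun _ => List.mem_union_right _) hgrow

instance : Fintype Dir where
  elems := ⟨[Dir.left, Dir.stay, Dir.right], by simp⟩
  complete d := by cases d <;> simp

/-- Check that no halting machine extending the table `p` leaves more than `m` ones on the tape,
by running `p` and branching over the undefined entry at which it halts. A table that does not halt
in fewer than `steps` steps has to be refuted by a closed set of windows of radius `n + 1`. -/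
def checkOnes [Fintype Q] (q₀ : Q) (m steps n rounds : ℕ) : ℕ → Table Q → Bool
  | 0, p => decide (∀ k, (p k).isSome)
  | depth + 1, p =>
    match evalWithin (FinCfg.step p) steps (.blank q₀) with
    | none => extendsToClosed p rounds [window (n + 1) (initCfg q₀)]
    | some x => decide (x.support.card ≤ m) && decide (∀ t,
        checkOnes q₀ m steps n rounds depth (Function.update p x.key (some t)) = true)

theorem encard_ones_le_of_checkOnes [Fintype Q] {m steps rounds depth : ℕ}
    (hcheck : checkOnes q₀ m steps n rounds depth p = true) (hext : Extends f p) {c : Cfg Q}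
    (hc : c ∈ eval (stepTM f) (initCfg q₀)) : (ones c.tape).encard ≤ m := by
  induction depth generalizing p with
  | zero =>
    obtain ⟨t, ht⟩ := Option.isSome_iff_exists.1 (of_decide_eq_true hcheck (c.state, c.tape c.head))
    have hhalt : Halted f c := stepTM_eq_none_iff.1 (mem_eval.1 hc).2
    exact absurd (hhalt.symm.trans (hext _ t ht)) (Option.some_ne_none t).symm
  | succ depth ih =>
    rw [checkOnes] at hcheck
    split at hcheck
    · refine absurd (evalDom_of_le (fun _ _ => hext.mem_stepTM) (Part.dom_iff_mem.2 ⟨c, hc⟩)) ?_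
      exact Covered.not_evalDom (covered_initCfg (List.mem_singleton.2 rfl)) hcheck
    · next x hx =>
      obtain ⟨hcard, hbranch⟩ := (Bool.and_eq_true _ _).mp hcheck
      have hpx : x.toCfg ∈ eval (stepTM p) (initCfg q₀) := by
        rw [← FinCfg.toCfg_blank, FinCfg.eval_toCfg]
        exact Part.mem_map _ (mem_eval_of_evalWithin hx)
      cases hf : f x.key with
      | none =>
        have hhalt : stepTM f x.toCfg = none := stepTM_eq_none_iff.2 hf
        have hcx : c = x.toCfg :=
          Part.mem_unique hc (hext.eval_eq hpx ▸ mem_eval.2 ⟨.refl, hhalt⟩)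
        rw [hcx, FinCfg.encard_ones_toCfg]
        exact_mod_cast of_decide_eq_true hcard
      | some t => exact ih (of_decide_eq_true hbranch t) (hext.update hf)

theorem count_le_of_checkOnes [Fintype Q] {m steps rounds depth : ℕ}
    (hcheck : checkOnes q₀ m steps n rounds depth (fun _ => none) = true) {w : List Bool} {t : ℕ}
    (h : Computes f q₀ w t) : w.count true ≤ m := by
  obtain ⟨c, hc, hhalt, hw⟩ := h
  have heval : c ∈ eval (stepTM f) (initCfg q₀) :=
    mem_eval.2 ⟨reaches_of_stepsTM hc, stepTM_eq_none_iff.2 hhalt⟩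
  have hones := encard_ones_le_of_checkOnes hcheck (fun _ _ => nofun) heval
  rw [encard_ones_of_tapeWord hw] at hones
  exact_mod_cast hones

end Search

-- Every table that halts does so within 5 steps; windows of radius 1 do not refute all the others.
theorem checkOnes_fin_two : checkOnes (0 : Fin 2) 4 6 1 12 4 (fun _ => none) = true := by
  decide +kernel

/-- The two-state busy beaver. -/
def champion : Table (Fin 2)
  | (0, false) => some (1, true, .right)
  | (0, true) => some (1, true, .left)
  | (1, false) => some (0, true, .left)
  | (1, true) => none

theorem champion_computes : Computes champion 0 [true, true, true, true] 5 := by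
  refine ⟨_, rfl, rfl, -2, fun k hk => ?_, fun j hj => ?_, fun _ => ⟨rfl, rfl⟩⟩
  · have hk : k < 4 := hk
    interval_cases k <;> rfl
  · by_contra hout
    have hne : j ≠ -2 ∧ j ≠ -1 ∧ j ≠ 0 ∧ j ≠ 1 := by
      simp only [List.length_cons, List.length_nil] at hout
      omega
    simp [Dir.move, initCfg, hne] at hj

end BusyBeaver

/-- BB(2) = 4: among all Turing machines with at most 2 states
(in the model without a separate halting state) that halt on the all-zero
tape, the maximum number of 1s in the computed word is exactly 4. -/
theorem busy_beaver_2 :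
    IsGreatest
      {m : ℕ |
        ∃ (f : Fin 2 × Bool → Option (Fin 2 × Bool × Dir)) (w : List Bool) (t : ℕ),
          Computes f 0 w t ∧ w.count true = m} 4 := by
  refine ⟨⟨BusyBeaver.champion, _, _, BusyBeaver.champion_computes, rfl⟩, ?_⟩
  rintro m ⟨f, w, t, hcomp, rfl⟩
  exact BusyBeaver.count_le_of_checkOnes BusyBeaver.checkOnes_fin_two hcomp
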